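/- Positive-measure pieces of orbits span everything: for every ℓ with 2ℓ ∈ ℕ, every nonzero v ∈ ℂ^{2ℓ+1}, and every Borel measurable subset A ⊆ SU(2) with μ(A) > 0, the complex linear span of {D^ℓ(g) v : g ∈ A} is all of ℂ^{2ℓ+1}. -/

import Mathlib

open scoped ComplexConjugate Matrix
open MeasureTheory Complex

noncomputable section

/-- `SU(2)` realized as the subgroup of the `2 × 2` complex unitary group consisting of the
matrices of determinant one; its elements are exactly the matrices
`h(α,β) = !![α, -conj β; β, conj α]` with `|α|² + |β|² = 1`. -/
def SU2 : Subgroup (Matrix.unitaryGroup (Fin 2) ℂ) where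
  carrier := {A | (A : Matrix (Fin 2) (Fin 2) ℂ).det = 1}
  mul_mem' := by
    intro A B hA hB
    simp only [Set.mem_setOf_eq] at *
    simp [Matrix.UnitaryGroup.mul_val, Matrix.det_mul, hA, hB]
  one_mem' := by simp [Set.mem_setOf_eq]
  inv_mem' := by
    intro A hA
    simp only [Set.mem_setOf_eq] at *
    simp [Matrix.UnitaryGroup.inv_val, Matrix.star_eq_conjTranspose, Matrix.det_conjTranspose, hA]

instance : MeasurableSpace SU2 := borel SU2
instance : BorelSpace SU2 := ⟨rfl⟩

/-- The matrix `h(α,β)`. -/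
def h (a b : ℂ) : Matrix (Fin 2) (Fin 2) ℂ := !![a, -conj b; b, conj a]

/-- The entry `α` of an element `g = h(α,β)` of `SU(2)`. -/
def ga (g : SU2) : ℂ := g.1.1 0 0

/-- The entry `β` of an element `g = h(α,β)` of `SU(2)`. -/
def gb (g : SU2) : ℂ := g.1.1 1 0

/-- `IsWigner n D` states that `D` is the family of Wigner functions `D^ℓ_{m,s}` for `ℓ = n/2`,
where the row index `j` corresponds to `m = j - ℓ` and the column index `k` to `s = k - ℓ`:
for every `g = h(α,β) ∈ SU(2)` and all `z₀ z₁ : ℂ`,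
`∑ⱼ √(binom n j) z₀^j z₁^(n-j) D j k g = √(binom n k) (conj α z₀ + conj β z₁)^k (-β z₀ + α z₁)^(n-k)`. -/
def IsWigner (n : ℕ) (D : Fin (n + 1) → Fin (n + 1) → SU2 → ℂ) : Prop :=
  ∀ (g : SU2) (k : Fin (n + 1)) (z₀ z₁ : ℂ),
    ∑ j : Fin (n + 1),
        (Real.sqrt (n.choose (j : ℕ)) : ℂ) * z₀ ^ (j : ℕ) * z₁ ^ (n - (j : ℕ)) * D j k g
      = (Real.sqrt (n.choose (k : ℕ)) : ℂ) * (conj (ga g) * z₀ + conj (gb g) * z₁) ^ (k : ℕ)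
          * (-(gb g) * z₀ + ga g * z₁) ^ (n - (k : ℕ))

/-- The action of the Wigner matrix `D^ℓ(g)` on a vector `v ∈ ℂ^{2ℓ+1}`. -/
def DVec {n : ℕ} (D : Fin (n + 1) → Fin (n + 1) → SU2 → ℂ) (g : SU2)
    (v : Fin (n + 1) → ℂ) : Fin (n + 1) → ℂ :=
  fun j => ∑ k, D j k g * v k

/-- The Hermitian inner product `⟨v,w⟩ = ∑ₖ conj (v k) * (w k)` on `ℂ^N`. -/
def herm {N : ℕ} (v w : Fin N → ℂ) : ℂ := ∑ r, conj (v r) * w r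

/-- polynomial attached to a vector -/
def PP {n : ℕ} (w : Fin (n + 1) → ℂ) (x y : ℂ) : ℂ :=
  ∑ j : Fin (n + 1), (Real.sqrt (n.choose (j : ℕ)) : ℂ) * x ^ (j : ℕ) * y ^ (n - (j : ℕ)) * w j

lemma sqrt_choose_ne {n : ℕ} (j : Fin (n + 1)) : (Real.sqrt (n.choose (j : ℕ)) : ℂ) ≠ 0 := by
  have : 0 < n.choose (j : ℕ) := Nat.choose_pos (Nat.lt_succ_iff.mp j.2)
  have h2 : 0 < Real.sqrt (n.choose (j : ℕ)) := Real.sqrt_pos.mpr (by exact_mod_cast this)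
  exact_mod_cast h2.ne'

lemma PP_inj {n : ℕ} (w w' : Fin (n + 1) → ℂ) (hw : ∀ x y, PP w x y = PP w' x y) : w = w' := by
  have key := Matrix.eq_zero_of_forall_index_sum_pow_mul_eq_zero
    (f := fun j : Fin (n + 1) => ((j : ℕ) : ℂ))
    (v := fun j : Fin (n + 1) => (Real.sqrt (n.choose (j : ℕ)) : ℂ) * (w j - w' j))
    (by
      intro a b hab
      exact Fin.ext (Nat.cast_injective (R := ℂ) hab))
    (by
      intro j
      have h1 := hw ((j : ℕ) : ℂ) 1
      unfold PP at h1
      rw [← sub_eq_zero, ← Finset.sum_sub_distrib] at h1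
      rw [← h1]
      apply Finset.sum_congr rfl
      intro i _
      simp only [one_pow]
      ring)
  funext j
  have := congrFun key j
  simp only [Pi.zero_apply, mul_eq_zero, sqrt_choose_ne j, false_or] at this
  exact sub_eq_zero.mp this

lemma PP_DVec {n : ℕ} {D : Fin (n + 1) → Fin (n + 1) → SU2 → ℂ} (hD : IsWigner n D) (g : SU2)
    (w : Fin (n + 1) → ℂ) (x y : ℂ) :
    PP (DVec D g w) x y
      = PP w (conj (ga g) * x + conj (gb g) * y) (-(gb g) * x + ga g * y) := by
  unfold PP DVec
  simp_rw [Finset.mul_sum]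
  rw [Finset.sum_comm]
  apply Finset.sum_congr rfl
  intro k _
  rw [← hD g k x y, Finset.sum_mul]
  apply Finset.sum_congr rfl
  intro j _
  ring

lemma SU2_entries (g : SU2) : g.1.1 0 1 = - conj (gb g) ∧ g.1.1 1 1 = conj (ga g) := by
  have hd : g.1.1.det = 1 := g.2
  have hu : star g.1.1 * g.1.1 = 1 := (Matrix.mem_unitaryGroup_iff').1 g.1.2
  have e00 := congrFun (congrFun hu 0) 0
  have e01 := congrFun (congrFun hu 0) 1
  rw [Matrix.det_fin_two] at hd
  simp [Matrix.mul_apply, Fin.sum_univ_two, Matrix.star_apply] at e00 e01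
  unfold ga gb
  constructor
  · linear_combination (g.1.1 0 1) * (-e00) + (g.1.1 0 0) * e01 - conj (g.1.1 1 0) * hd
  · linear_combination (g.1.1 1 1) * (-e00) + (g.1.1 1 0) * e01 + conj (g.1.1 0 0) * hd

lemma ga_mul (g k : SU2) : ga (g * k) = ga g * ga k - conj (gb g) * gb k := by
  have := (SU2_entries g).1
  unfold ga at *
  simp [Matrix.mul_apply, Fin.sum_univ_two, this]
  unfold gb
  ring

lemma gb_mul (g k : SU2) : gb (g * k) = gb g * ga k + conj (ga g) * gb k := by
  have := (SU2_entries g).2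
  unfold gb at *
  have e : (g * k).1.1 1 0 = g.1.1 1 0 * k.1.1 0 0 + g.1.1 1 1 * k.1.1 1 0 := by
    simp [Matrix.mul_apply, Fin.sum_univ_two]
  rw [e, this]
  rfl

lemma DVec_mul {n : ℕ} {D : Fin (n + 1) → Fin (n + 1) → SU2 → ℂ} (hD : IsWigner n D) (g k : SU2)
    (w : Fin (n + 1) → ℂ) : DVec D (g * k) w = DVec D g (DVec D k w) := by
  apply PP_inj
  intro x y
  rw [PP_DVec hD, PP_DVec hD, PP_DVec hD, ga_mul, gb_mul]
  simp only [map_add, map_sub, map_mul, conj_conj]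
  congr 1 <;> ring

lemma DVec_one {n : ℕ} {D : Fin (n + 1) → Fin (n + 1) → SU2 → ℂ} (hD : IsWigner n D)
    (w : Fin (n + 1) → ℂ) : DVec D 1 w = w := by
  apply PP_inj
  intro x y
  rw [PP_DVec hD]
  simp [ga, gb]

/-- `DVec` as a linear map. -/
def DL {n : ℕ} (D : Fin (n + 1) → Fin (n + 1) → SU2 → ℂ) (g : SU2) :
    (Fin (n + 1) → ℂ) →ₗ[ℂ] (Fin (n + 1) → ℂ) := Matrix.mulVecLin (Matrix.of fun j k => D j k g)

lemma DL_apply {n : ℕ} (D : Fin (n + 1) → Fin (n + 1) → SU2 → ℂ) (g : SU2)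
    (w : Fin (n + 1) → ℂ) : DL D g w = DVec D g w := by
  funext j
  simp [DL, DVec, Matrix.mulVec, dotProduct]

/-- element of SU2 from a pair -/
def mkSU (a b : ℂ) (hab : conj a * a + conj b * b = 1) : SU2 :=
  ⟨⟨h a b, by
    rw [Matrix.mem_unitaryGroup_iff']
    ext i j
    fin_cases i <;> fin_cases j <;>
      simp [h, Matrix.mul_apply, Fin.sum_univ_two, Matrix.star_apply]
    · exact hab
    · ring
    · ring
    · linear_combination hab⟩, by
    change (h a b).det = 1
    rw [h, Matrix.det_fin_two]
    simp
    linear_combination hab⟩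

lemma SU2_ext (g k : SU2) (h1 : ga g = ga k) (h2 : gb g = gb k) : g = k := by
  apply Subtype.ext
  apply Subtype.ext
  ext i j
  fin_cases i <;> fin_cases j
  · exact h1
  · exact (SU2_entries g).1.trans (by rw [h2]; exact (SU2_entries k).1.symm)
  · exact h2
  · exact (SU2_entries g).2.trans (by rw [h1]; exact (SU2_entries k).2.symm)

/-- diagonal torus -/
def TT (t : ℝ) : SU2 := mkSU (exp (t * I)) 0 (by
  rw [← exp_conj, ← exp_add]; simp)

/-- rotations -/
def RR (t : ℝ) : SU2 := mkSU (Real.cos t) (Real.sin t) (by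
  simp only [conj_ofReal]
  have := Real.sin_sq_add_cos_sq t
  exact_mod_cast (by linear_combination this : Real.cos t * Real.cos t + Real.sin t * Real.sin t = 1))

lemma ga_TT (t : ℝ) : ga (TT t) = exp (t * I) := rfl
lemma gb_TT (t : ℝ) : gb (TT t) = 0 := rfl
lemma ga_RR (t : ℝ) : ga (RR t) = Real.cos t := rfl
lemma gb_RR (t : ℝ) : gb (RR t) = Real.sin t := rfl

lemma TT_pow (t : ℝ) (m : ℕ) : TT t ^ m = TT (m * t) := by
  induction m with
  | zero =>
    apply SU2_ext
    · rw [ga_TT]; simp [ga]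
    · rw [gb_TT]; simp [gb]
  | succ m ih =>
    rw [pow_succ, ih]
    apply SU2_ext
    · rw [ga_mul, ga_TT, ga_TT, ga_TT, gb_TT, ← exp_add]
      simp only [map_zero, zero_mul, mul_zero, sub_zero]
      congr 1
      push_cast
      ring
    · rw [gb_mul, gb_TT, gb_TT, gb_TT]; simp

lemma RR_pow (t : ℝ) (m : ℕ) : RR t ^ m = RR (m * t) := by
  induction m with
  | zero =>
    apply SU2_ext
    · rw [ga_RR]; simp [ga]
    · rw [gb_RR]; simp [gb]
  | succ m ih =>
    rw [pow_succ, ih]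
    have e : ((m + 1 : ℕ) : ℝ) * t = m * t + t := by push_cast; ring
    rw [e]
    apply SU2_ext
    · rw [ga_mul, ga_RR, ga_RR, ga_RR, gb_RR, gb_RR, Real.cos_add, conj_ofReal]
      push_cast; ring
    · rw [gb_mul, gb_RR, gb_RR, gb_RR, ga_RR, ga_RR, Real.sin_add, conj_ofReal]
      push_cast; ring

lemma DVec_TT {n : ℕ} {D : Fin (n + 1) → Fin (n + 1) → SU2 → ℂ} (hD : IsWigner n D) (t : ℝ)
    (w : Fin (n + 1) → ℂ) :
    DVec D (TT t) w = fun k : Fin (n + 1) => exp (n * (t * I)) * exp (-(2 * (t * I))) ^ (k : ℕ) * w k := by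
  apply PP_inj
  intro x y
  rw [PP_DVec hD, ga_TT, gb_TT]
  unfold PP
  apply Finset.sum_congr rfl
  intro k _
  have hk : (k : ℕ) ≤ n := Nat.lt_succ_iff.mp k.2
  have e : exp (n * (t * I)) * exp (-(2 * (t * I))) ^ (k : ℕ)
      = conj (exp (t * I)) ^ (k : ℕ) * exp (t * I) ^ (n - (k : ℕ)) := by
    rw [← exp_conj, ← exp_nat_mul, ← exp_nat_mul, ← exp_nat_mul, ← exp_add, ← exp_add]
    congr 1
    rw [Nat.cast_sub hk]
    simp
    ring
  beta_reduce
  rw [e, map_zero, zero_mul, add_zero, neg_zero, zero_mul, zero_add, mul_pow, mul_pow]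
  ring

lemma nat_mul_pi (m : ℕ) (hm : 0 < m) : Real.sin m ≠ 0 := by
  intro hs
  obtain ⟨k, hk⟩ := Real.sin_eq_zero_iff.mp hs
  have hk0 : k ≠ 0 := by
    rintro rfl
    simp only [Int.cast_zero, zero_mul] at hk
    have : (0 : ℝ) < m := by exact_mod_cast hm
    linarith
  have hir := irrational_pi.intCast_mul hk0
  rw [hk] at hir
  exact (Nat.not_irrational m) hir

lemma exp_inj_aux (m : ℕ) (hm : 0 < m) (a b : ℕ)
    (hab : exp (-(2 * (((a * m : ℝ) : ℂ) * I))) = exp (-(2 * (((b * m : ℝ) : ℂ) * I)))) : a = b := by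
  wlog hlt : a < b generalizing a b
  · rcases Nat.lt_trichotomy a b with h1 | h1 | h1
    · exact this a b hab h1
    · exact h1
    · exact (this b a hab.symm h1).symm
  exfalso
  obtain ⟨k, hk⟩ := exp_eq_exp_iff_exists_int.mp hab
  have h1 : (((b - a : ℕ) * m : ℕ) : ℝ) = k * Real.pi := by
    have h2 : (((b : ℂ) - a) * m - k * Real.pi) * (2 * I) = 0 := by
      push_cast at hk
      linear_combination hk
    have h3 : ((b : ℂ) - a) * m - k * Real.pi = 0 := by
      simpa using h2
    rw [Nat.cast_mul, Nat.cast_sub hlt.le]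
    have h4 : ((((b : ℝ) - a) * m - k * Real.pi : ℝ) : ℂ) = 0 := by push_cast; exact h3
    have h5 := ofReal_eq_zero.mp h4
    linarith
  apply nat_mul_pi ((b - a) * m) (Nat.mul_pos (by omega) hm)
  rw [h1]
  exact Real.sin_int_mul_pi k

lemma DVec_pow_mem {n : ℕ} {D : Fin (n + 1) → Fin (n + 1) → SU2 → ℂ} (hD : IsWigner n D)
    (W : Submodule ℂ (Fin (n + 1) → ℂ)) (g : SU2) (hg : ∀ w ∈ W, DVec D g w ∈ W) (m : ℕ) :
    ∀ w ∈ W, DVec D (g ^ m) w ∈ W := by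
  induction m with
  | zero => intro w hw; rw [pow_zero, DVec_one hD]; exact hw
  | succ m ih => intro w hw; rw [pow_succ, DVec_mul hD]; exact ih _ (hg w hw)

lemma single_mem {n : ℕ} {D : Fin (n + 1) → Fin (n + 1) → SU2 → ℂ} (hD : IsWigner n D)
    (W : Submodule ℂ (Fin (n + 1) → ℂ)) (m : ℕ) (hm : 0 < m)
    (hg : ∀ w ∈ W, DVec D (TT m) w ∈ W) (w : Fin (n + 1) → ℂ) (hw : w ∈ W) (k : Fin (n + 1))
    (hk : w k ≠ 0) : (Pi.single k 1 : Fin (n + 1) → ℂ) ∈ W := by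
  by_contra hn
  obtain ⟨f, hf, hfW⟩ := Submodule.exists_le_ker_of_notMem hn
  have key := Matrix.eq_zero_of_forall_index_sum_pow_mul_eq_zero
    (f := fun j : Fin (n + 1) => exp (-(2 * ((((j : ℕ) * m : ℝ) : ℂ) * I))))
    (v := fun i : Fin (n + 1) => w i * f (Pi.single i 1))
    (by
      intro a b hab
      exact Fin.ext (exp_inj_aux m hm _ _ hab))
    (by
      intro j
      have h1 := DVec_pow_mem hD W _ hg j w hw
      rw [TT_pow, DVec_TT hD] at h1
      have h2 : f _ = 0 := hfW h1
      rw [LinearMap.pi_apply_eq_sum_univ f] at h2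
      have h3 : exp (n * ((((j : ℕ) * m : ℝ) : ℂ) * I)) * ∑ i : Fin (n + 1),
          exp (-(2 * ((((j : ℕ) * m : ℝ) : ℂ) * I))) ^ (i : ℕ) * (w i * f (Pi.single i 1)) = 0 := by
        rw [← h2, Finset.mul_sum]
        apply Finset.sum_congr rfl
        intro i _
        have e : (Pi.single i 1 : Fin (n + 1) → ℂ) = fun j => if i = j then 1 else 0 := by
          funext j
          simp [Pi.single_apply, eq_comm]
        rw [e, smul_eq_mul]
        ring
      exact (mul_eq_zero.mp h3).resolve_left (exp_ne_zero _))
  have := congrFun key k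
  simp [hk] at this
  exact hf this

lemma PP_single {n : ℕ} (k : Fin (n + 1)) (x y : ℂ) :
    PP (Pi.single k 1) x y
      = (Real.sqrt (n.choose (k : ℕ)) : ℂ) * x ^ (k : ℕ) * y ^ (n - (k : ℕ)) := by
  unfold PP
  rw [Finset.sum_eq_single k]
  · simp
  · intro j _ hj
    simp [hj]
  · simp

lemma PP_one_zero {n : ℕ} (w : Fin (n + 1) → ℂ) : PP w 1 0 = w (Fin.last n) := by
  unfold PP
  rw [Finset.sum_eq_single (Fin.last n)]
  · simp
  · intro j _ hj
    have : n - (j : ℕ) ≠ 0 := by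
      have := Fin.val_lt_last hj
      omega
    simp [this]
  · simp

lemma irred {n : ℕ} {D : Fin (n + 1) → Fin (n + 1) → SU2 → ℂ} (hD : IsWigner n D)
    (W : Submodule ℂ (Fin (n + 1) → ℂ)) (m : ℕ) (hm : 0 < m) (m' : ℕ) (hm' : 0 < m')
    (hT : ∀ w ∈ W, DVec D (TT m) w ∈ W) (hR : ∀ w ∈ W, DVec D (RR m') w ∈ W)
    (w : Fin (n + 1) → ℂ) (hw : w ∈ W) (hw0 : w ≠ 0) : W = ⊤ := by
  have hs : (Real.sin m' : ℂ) ≠ 0 := by exact_mod_cast nat_mul_pi m' hm'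
  have hc : (Real.cos m' : ℂ) ≠ 0 := by
    have h1 := nat_mul_pi (2 * m') (by omega)
    push_cast at h1
    rw [Real.sin_two_mul] at h1
    exact_mod_cast right_ne_zero_of_mul h1
  obtain ⟨k, hk⟩ := Function.ne_iff.mp hw0
  have hek := single_mem hD W m hm hT w hw k hk
  have hlast : (Pi.single (Fin.last n) 1 : Fin (n + 1) → ℂ) ∈ W := by
    apply single_mem hD W m hm hT _ (hR _ hek)
    rw [← PP_one_zero (DVec D (RR m') (Pi.single k 1)), PP_DVec hD, PP_single, ga_RR, gb_RR]
    simp only [conj_ofReal, mul_one, mul_zero, add_zero]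
    exact mul_ne_zero (mul_ne_zero (sqrt_choose_ne k) (pow_ne_zero _ hc))
      (pow_ne_zero _ (neg_ne_zero.mpr hs))
  have hform : DVec D (RR m') (Pi.single (Fin.last n) 1) = fun j : Fin (n + 1) =>
      (Real.sqrt (n.choose (j : ℕ)) : ℂ) * (Real.cos m' : ℂ) ^ (j : ℕ)
        * (Real.sin m' : ℂ) ^ (n - (j : ℕ)) := by
    apply PP_inj
    intro x y
    rw [PP_DVec hD, PP_single, ga_RR, gb_RR]
    simp only [conj_ofReal, Fin.val_last, Nat.choose_self, Nat.cast_one, Real.sqrt_one, ofReal_one,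
      Nat.sub_self, pow_zero, mul_one, one_mul]
    rw [add_pow, ← Fin.sum_univ_eq_sum_range (fun j => ((Real.cos m' : ℂ) * x) ^ j
      * ((Real.sin m' : ℂ) * y) ^ (n - j) * (n.choose j : ℂ)) (n + 1)]
    unfold PP
    apply Finset.sum_congr rfl
    intro j _
    have e : (Real.sqrt (n.choose (j : ℕ)) : ℂ) * (Real.sqrt (n.choose (j : ℕ)) : ℂ)
        = (n.choose (j : ℕ) : ℂ) := by
      rw [← ofReal_mul, Real.mul_self_sqrt (Nat.cast_nonneg _)]
      simp
    rw [← e, mul_pow, mul_pow]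
    ring
  have hall : ∀ j, (Pi.single j 1 : Fin (n + 1) → ℂ) ∈ W := by
    intro j
    apply single_mem hD W m hm hT _ (hR _ hlast)
    rw [hform]
    exact mul_ne_zero (mul_ne_zero (sqrt_choose_ne j) (pow_ne_zero _ hc)) (pow_ne_zero _ hs)
  rw [eq_top_iff]
  intro u _
  have hu : u = ∑ j, u j • (Pi.single j 1 : Fin (n + 1) → ℂ) := by
    funext i
    simp [Finset.sum_apply, Pi.single_apply]
  rw [hu]
  exact W.sum_mem fun j _ => W.smul_mem _ (hall j)

/-- span of an orbit piece -/
def WW {n : ℕ} (D : Fin (n + 1) → Fin (n + 1) → SU2 → ℂ) (v : Fin (n + 1) → ℂ) (A : Set SU2) :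
    Submodule ℂ (Fin (n + 1) → ℂ) :=
  Submodule.span ℂ {w : Fin (n + 1) → ℂ | ∃ g ∈ A, w = DVec D g v}

lemma WW_mono {n : ℕ} (D : Fin (n + 1) → Fin (n + 1) → SU2 → ℂ) (v : Fin (n + 1) → ℂ)
    {A B : Set SU2} (hAB : A ⊆ B) : WW D v A ≤ WW D v B := by
  apply Submodule.span_mono
  rintro w ⟨g, hg, rfl⟩
  exact ⟨g, hAB hg, rfl⟩

lemma recur (μ : Measure SU2) [μ.IsHaarMeasure] [IsProbabilityMeasure μ]
    {n : ℕ} {D : Fin (n + 1) → Fin (n + 1) → SU2 → ℂ} (hD : IsWigner n D)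
    (v : Fin (n + 1) → ℂ) (A : Set SU2) (hA : MeasurableSet A) (hApos : μ A ≠ 0)
    (hmin : ∀ B ⊆ A, MeasurableSet B → μ B ≠ 0 → WW D v B = WW D v A) (g : SU2) :
    ∃ m : ℕ, 0 < m ∧ ∀ w ∈ WW D v A, DVec D (g ^ m) w ∈ WW D v A := by
  have hmp : MeasurePreserving (fun x : SU2 => g * x) μ μ := measurePreserving_mul_left μ g
  obtain ⟨m, hm, hpos⟩ :=
    hmp.conservative.exists_gt_measure_inter_ne_zero hA.nullMeasurableSet hApos 0
  refine ⟨m, hm, ?_⟩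
  have hB : MeasurableSet (A ∩ (fun x : SU2 => g * x)^[m] ⁻¹' A) :=
    hA.inter (hmp.measurable.iterate m hA)
  rw [← hmin _ Set.inter_subset_left hB hpos]
  intro w hw
  rw [← DL_apply]
  have hle : WW D v (A ∩ (fun x : SU2 => g * x)^[m] ⁻¹' A) ≤ (WW D v A).comap (DL D (g ^ m)) := by
    apply Submodule.span_le.mpr
    rintro _ ⟨x, ⟨_, hx2⟩, rfl⟩
    simp only [Submodule.comap_coe, Set.mem_preimage, SetLike.mem_coe]
    rw [DL_apply, ← DVec_mul hD]
    apply Submodule.subset_span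
    refine ⟨g ^ m * x, ?_, rfl⟩
    have := hx2
    rw [Set.mem_preimage, mul_left_iterate] at this
    exact this
  have := hle hw
  rw [hmin _ Set.inter_subset_left hB hpos]
  exact this

/-- positive-measure pieces of orbits span everything: if `μ A > 0` then
`span {D^ℓ(g) v : g ∈ A} = ℂ^{2ℓ+1}` for every nonzero `v`. -/
theorem wigner_orbit_piece_spans (μ : Measure SU2) [μ.IsHaarMeasure] [IsProbabilityMeasure μ]
    (n : ℕ) (D : Fin (n + 1) → Fin (n + 1) → SU2 → ℂ) (hD : IsWigner n D)
    (v : Fin (n + 1) → ℂ) (hv : v ≠ 0)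
    (A : Set SU2) (hA : MeasurableSet A) (hApos : 0 < μ A) :
    Submodule.span ℂ {w : Fin (n + 1) → ℂ | ∃ g ∈ A, w = DVec D g v} = ⊤ := by

  classical
  obtain ⟨B, ⟨hBA, hBm, hBpos⟩, hBmin⟩ := (measure (fun B : Set SU2 =>
    Module.finrank ℂ (WW D v B))).wf.has_min
    {B : Set SU2 | B ⊆ A ∧ MeasurableSet B ∧ μ B ≠ 0} ⟨A, subset_rfl, hA, hApos.ne'⟩
  have hmin : ∀ C ⊆ B, MeasurableSet C → μ C ≠ 0 → WW D v C = WW D v B := by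
    intro C hC hCm hCpos
    apply Submodule.eq_of_le_of_finrank_le (WW_mono D v hC)
    exact not_lt.mp (hBmin C ⟨hC.trans hBA, hCm, hCpos⟩)
  obtain ⟨m, hm, hT⟩ := recur μ hD v B hBm hBpos hmin (TT 1)
  obtain ⟨m', hm', hR⟩ := recur μ hD v B hBm hBpos hmin (RR 1)
  rw [TT_pow, mul_one] at hT
  rw [RR_pow, mul_one] at hR
  obtain ⟨g, hg⟩ := nonempty_of_measure_ne_zero hBpos
  have htop := irred hD (WW D v B) m hm m' hm' hT hR (DVec D g v)
    (Submodule.subset_span ⟨g, hg, rfl⟩) (by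
      intro h0
      apply hv
      have h1 := DVec_mul hD g⁻¹ g v
      rw [inv_mul_cancel, DVec_one hD, h0] at h1
      rw [h1, ← DL_apply, map_zero])
  exact top_le_iff.mp (htop ▸ WW_mono D v hBA)
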